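/- arXiv:2508.07160 — 2 statements merged into one kernel-verified Lean document; each statement's English description precedes it below -/
import Mathlib

section
/- Let K = MN. For every integer q, (Φ_N ⊗ I_M) D_K^q (Φ_N^H ⊗ I_M) = α_q D_K^q Π_K^{qM}, where α_q = exp(i(π/N)·q·((N mod 2) − q)). -/
open Matrix Complex

/-- The `N × N` discrete Fresnel transform (DFnT) matrix `Φ_N`, with entries
`[Φ_N]_{m,n} = (1/√N) · exp(−iπ/4 + i(π/N)(m − n + (N mod 2)/2)²)`. -/
noncomputable def dfnt (N : ℕ) : Matrix (Fin N) (Fin N) ℂ :=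
  Matrix.of fun m n : Fin N =>
    (1 / (Real.sqrt N : ℂ)) *
      Complex.exp (-((Real.pi : ℂ) / 4) * Complex.I +
        ((Real.pi : ℂ) / N) * Complex.I *
          (((m : ℕ) : ℂ) - ((n : ℕ) : ℂ) + ((N % 2 : ℕ) : ℂ) / 2) ^ 2)

/-- The `q`-th integer power `D_K^q` of the diagonal matrix
`D_K = diag(1, e^{2πi/K}, …, e^{2πi(K−1)/K})`: its `k`-th diagonal entry is `e^{2πiqk/K}`. -/
noncomputable def Dzpow (K : ℕ) (q : ℤ) : Matrix (Fin K) (Fin K) ℂ :=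
  Matrix.diagonal fun k : Fin K =>
    Complex.exp (2 * (Real.pi : ℂ) * Complex.I * (q : ℂ) * ((k : ℕ) : ℂ) / (K : ℂ))

/-- The `q`-th integer power `Π_K^q` of the cyclic shift permutation matrix `Π_K`
(`[Π_K]_{m,n} = 1` iff `m ≡ n+1 (mod K)`): `[Π_K^q]_{m,n} = 1` iff `m ≡ n + q (mod K)`. -/
def Pzpow (K : ℕ) (q : ℤ) : Matrix (Fin K) (Fin K) ℂ :=
  Matrix.of fun m n : Fin K =>
    if (((m : ℕ) : ℤ) - ((n : ℕ) : ℤ) - q) % (K : ℤ) = 0 then 1 else 0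

/-- `α_q = exp(i(π/N)·q·((N mod 2) − q))`. -/
noncomputable def alphaCoef (N : ℕ) (q : ℤ) : ℂ :=
  Complex.exp (Complex.I * ((Real.pi : ℂ) / N) * (q : ℂ) * (((N % 2 : ℕ) : ℂ) - (q : ℂ)))

/-- Kronecker product of an `N × N` matrix `A` with an `M × M` matrix `B`, using the index
convention `[A ⊗ B]_{n₁M+m₁, n₂M+m₂} = A_{n₁,n₂} · B_{m₁,m₂}`, realized on `Fin (M * N)`
via `i ↦ (i / M, i % M)`. -/
def kron {M N : ℕ} (hM : 0 < M) (A : Matrix (Fin N) (Fin N) ℂ) (B : Matrix (Fin M) (Fin M) ℂ) :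
    Matrix (Fin (M * N)) (Fin (M * N)) ℂ :=
  Matrix.of fun i j : Fin (M * N) =>
    A ⟨(i : ℕ) / M, Nat.div_lt_of_lt_mul i.isLt⟩ ⟨(j : ℕ) / M, Nat.div_lt_of_lt_mul j.isLt⟩ *
      B ⟨(i : ℕ) % M, Nat.mod_lt _ hM⟩ ⟨(j : ℕ) % M, Nat.mod_lt _ hM⟩

lemma geom_aux (N : ℕ) (hN : 0 < N) (a : ℤ) :
    ∑ n : Fin N, Complex.exp (2 * (Real.pi : ℂ) * Complex.I * (a : ℂ) * ((n : ℕ) : ℂ) / (N : ℂ)) =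
      if (N : ℤ) ∣ a then (N : ℂ) else 0 := by
  have hN' : (N : ℂ) ≠ 0 := by exact_mod_cast hN.ne'
  have h1 : ∀ n : ℕ, Complex.exp (2 * (Real.pi : ℂ) * Complex.I * (a : ℂ) * (n : ℂ) / (N : ℂ)) =
      Complex.exp (2 * (Real.pi : ℂ) * Complex.I * (a : ℂ) / (N : ℂ)) ^ n := by
    intro n
    rw [← Complex.exp_nat_mul]
    congr 1
    ring
  rw [Fin.sum_univ_eq_sum_range
    (fun n => Complex.exp (2 * (Real.pi : ℂ) * Complex.I * (a : ℂ) * (n : ℂ) / (N : ℂ))) N]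
  simp only [h1]
  have hpi : (2 * (Real.pi : ℂ) * Complex.I) ≠ 0 := Complex.two_pi_I_ne_zero
  have h2 : Complex.exp (2 * (Real.pi : ℂ) * Complex.I * (a : ℂ) / (N : ℂ)) = 1 ↔ (N : ℤ) ∣ a := by
    rw [Complex.exp_eq_one_iff]
    constructor
    · rintro ⟨t, ht⟩
      refine ⟨t, ?_⟩
      rw [div_eq_iff hN'] at ht
      have h3 : (2 * (Real.pi : ℂ) * Complex.I) * (a : ℂ) =
        (2 * (Real.pi : ℂ) * Complex.I) * ((N : ℂ) * t) := by rw [ht]; ring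
      have := mul_left_cancel₀ hpi h3
      exact_mod_cast this
    · rintro ⟨t, rfl⟩
      refine ⟨t, ?_⟩
      push_cast
      field_simp
  split_ifs with h
  · rw [h2.2 h]; simp
  · have h4 : Complex.exp (2 * (Real.pi : ℂ) * Complex.I * (a : ℂ) / (N : ℂ)) ≠ 1 :=
      fun h' => h (h2.1 h')
    rw [geom_sum_eq h4, ← h1, mul_div_assoc, div_self hN', mul_one]
    have : Complex.exp (2 * (Real.pi : ℂ) * Complex.I * (a : ℂ)) = 1 := by
      rw [Complex.exp_eq_one_iff]; exact ⟨a, by ring⟩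
    rw [this]; simp

lemma dfnt_mul_star (N : ℕ) (hN : 0 < N) (m m' n : Fin N) :
    dfnt N m n * star (dfnt N m' n) = (1 / (N : ℂ)) *
      Complex.exp (((Real.pi : ℂ) / N) * Complex.I * ((((m : ℕ) : ℂ) - ((m' : ℕ) : ℂ)) *
        (((m : ℕ) : ℂ) + ((m' : ℕ) : ℂ) - 2 * ((n : ℕ) : ℂ) + ((N % 2 : ℕ) : ℂ)))) := by
  have hs : (1 / (Real.sqrt N : ℂ)) * (1 / (Real.sqrt N : ℂ)) = 1 / (N : ℂ) := by
    rw [div_mul_div_comm, ← Complex.ofReal_mul, Real.mul_self_sqrt (Nat.cast_nonneg N)]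
    simp
  simp only [dfnt, Matrix.of_apply, Complex.star_def, map_mul, map_div₀, map_one,
    Complex.conj_ofReal, ← Complex.exp_conj, map_add, map_neg, map_pow, map_sub,
    Complex.conj_I, map_natCast, map_ofNat]
  rw [mul_mul_mul_comm, hs, ← Complex.exp_add]
  congr 2
  ring

lemma phase_aux (N : ℕ) (hN : 0 < N) (m m' q t : ℤ) (h : m - m' - q = N * t) :
    Complex.exp (((Real.pi : ℂ) / N) * Complex.I * (((m : ℂ) - (m' : ℂ)) *
        ((m : ℂ) + (m' : ℂ) + ((N % 2 : ℕ) : ℂ)))) =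
    Complex.exp (((Real.pi : ℂ) / N) * Complex.I * ((q : ℂ) *
        (2 * (m : ℂ) - q + ((N % 2 : ℕ) : ℂ)))) := by
  have hN' : (N : ℂ) ≠ 0 := by exact_mod_cast hN.ne'
  have hm : m' = m - q - N * t := by linarith
  obtain ⟨s, hs⟩ : ∃ s : ℤ, t * ((N % 2 : ℕ) : ℤ) - t ^ 2 * N = 2 * s := by
    have h1 : (N : ℤ) = 2 * ((N / 2 : ℕ) : ℤ) + ((N % 2 : ℕ) : ℤ) := by omega
    obtain ⟨u, hu⟩ := Int.even_mul_succ_self (t - 1)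
    refine ⟨-u * ((N % 2 : ℕ) : ℤ) - t ^ 2 * ((N / 2 : ℕ) : ℤ), ?_⟩
    rw [h1]
    generalize ((N % 2 : ℕ) : ℤ) = p at *
    generalize ((N / 2 : ℕ) : ℤ) = c at *
    have : (t - 1) * t = u + u := by rw [← hu]; ring
    linear_combination (-p) * this
  rw [Complex.exp_eq_exp_iff_exists_int]
  refine ⟨t * (m - q) + s, ?_⟩
  have hs' : (t : ℂ) * ((N % 2 : ℕ) : ℂ) - t ^ 2 * N = 2 * s := by
    have := congrArg (Int.cast : ℤ → ℂ) hs
    rw [Int.cast_sub, Int.cast_mul, Int.cast_mul, Int.cast_mul, Int.cast_pow, Int.cast_natCast,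
      Int.cast_natCast] at this
    simpa only [Int.cast_ofNat] using this
  rw [hm]
  push_cast at hs' ⊢
  field_simp
  linear_combination (N:ℂ) * hs'

lemma core_sum (M N : ℕ) (hM : 0 < M) (hN : 0 < N) (q : ℤ) (m m' : Fin N) (r : ℕ) :
    ∑ n : Fin N, dfnt N m n *
      Complex.exp (2 * (Real.pi : ℂ) * Complex.I * (q : ℂ) * ((M * (n : ℕ) + r : ℕ) : ℂ) /
        ((M * N : ℕ) : ℂ)) * star (dfnt N m' n) =
    if (N : ℤ) ∣ ((m : ℕ) : ℤ) - ((m' : ℕ) : ℤ) - q then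
      alphaCoef N q * Complex.exp (2 * (Real.pi : ℂ) * Complex.I * (q : ℂ) *
        ((M * (m : ℕ) + r : ℕ) : ℂ) / ((M * N : ℕ) : ℂ)) else 0 := by
  have hN' : (N : ℂ) ≠ 0 := by exact_mod_cast hN.ne'
  have hM' : (M : ℂ) ≠ 0 := by exact_mod_cast hM.ne'
  set E := Complex.exp (((Real.pi : ℂ) / N) * Complex.I * (((((m : ℕ) : ℤ) : ℂ) - (((m' : ℕ) : ℤ) : ℂ)) *
        ((((m : ℕ) : ℤ) : ℂ) + (((m' : ℕ) : ℤ) : ℂ) + ((N % 2 : ℕ) : ℂ)))) with hE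
  set R := Complex.exp (2 * (Real.pi : ℂ) * Complex.I * (q : ℂ) * (r : ℂ) / ((M * N : ℕ) : ℂ)) with hR
  have hterm : ∀ n : Fin N, dfnt N m n *
      Complex.exp (2 * (Real.pi : ℂ) * Complex.I * (q : ℂ) * ((M * (n : ℕ) + r : ℕ) : ℂ) /
        ((M * N : ℕ) : ℂ)) * star (dfnt N m' n) = (1 / (N : ℂ)) * E * R *
      Complex.exp (2 * (Real.pi : ℂ) * Complex.I *
        ((-(((m : ℕ) : ℤ) - ((m' : ℕ) : ℤ) - q) : ℤ) : ℂ) * ((n : ℕ) : ℂ) / (N : ℂ)) := by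
    intro n
    rw [mul_right_comm, dfnt_mul_star N hN, hE, hR, mul_assoc (1 / (N : ℂ)), mul_assoc (1 / (N : ℂ)),
      mul_assoc (1 / (N : ℂ)), ← Complex.exp_add, ← Complex.exp_add, ← Complex.exp_add]
    congr 2
    push_cast
    field_simp
    ring
  rw [Finset.sum_congr rfl (fun n _ => hterm n), ← Finset.mul_sum, geom_aux N hN]
  simp only [dvd_neg]
  split_ifs with h
  · obtain ⟨t, ht⟩ := h
    rw [hE, phase_aux N hN _ _ q t ht, hR, alphaCoef]
    have hc : ∀ x y : ℂ, 1 / (N : ℂ) * x * y * N = x * y := by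
      intro x y; field_simp
    rw [hc, ← Complex.exp_add, ← Complex.exp_add]
    congr 1
    push_cast
    field_simp
    ring
  · simp

/-- With `K = MN`, for every integer `q`,
`(Φ_N ⊗ I_M) D_K^q (Φ_N^H ⊗ I_M) = α_q D_K^q Π_K^{qM}`. -/
theorem kron_dfnt_Dzpow_kron_dfnt_conjTranspose (M N : ℕ) (hM : 0 < M) (hN : 0 < N) (q : ℤ) :
    kron hM (dfnt N) (1 : Matrix (Fin M) (Fin M) ℂ) * Dzpow (M * N) q *
        kron hM (dfnt N)ᴴ (1 : Matrix (Fin M) (Fin M) ℂ) =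
      alphaCoef N q • (Dzpow (M * N) q * Pzpow (M * N) (q * M)) := by
  have hlt : ∀ (n : Fin N) (r : ℕ), r < M → M * (n : ℕ) + r < M * N := by
    intro n r hr
    have h1 : (n : ℕ) + 1 ≤ N := n.isLt
    calc M * (n : ℕ) + r < M * (n : ℕ) + M := by omega
      _ = M * ((n : ℕ) + 1) := by ring
      _ ≤ M * N := Nat.mul_le_mul_left _ h1
  ext i j
  have hri : (i : ℕ) % M < M := Nat.mod_lt _ hM
  rw [Matrix.mul_apply, Matrix.smul_apply, Dzpow, Matrix.diagonal_mul]
  simp only [Matrix.mul_diagonal]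
  set m : Fin N := ⟨(i : ℕ) / M, Nat.div_lt_of_lt_mul i.isLt⟩ with hm
  set m' : Fin N := ⟨(j : ℕ) / M, Nat.div_lt_of_lt_mul j.isLt⟩ with hm'
  have key : ∑ n : Fin N, dfnt N m n *
      Complex.exp (2 * (Real.pi : ℂ) * Complex.I * (q : ℂ) * ((M * (n : ℕ) + (i : ℕ) % M : ℕ) : ℂ) /
        ((M * N : ℕ) : ℂ)) * (star (dfnt N m' n) *
          (if (i : ℕ) % M = (j : ℕ) % M then 1 else 0)) =
      ∑ k : Fin (M * N), kron hM (dfnt N) (1 : Matrix (Fin M) (Fin M) ℂ) i k *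
        Complex.exp (2 * (Real.pi : ℂ) * Complex.I * (q : ℂ) * ((k : ℕ) : ℂ) / ((M * N : ℕ) : ℂ)) *
        kron hM (dfnt N)ᴴ (1 : Matrix (Fin M) (Fin M) ℂ) k j := by
    refine Finset.sum_of_injOn (fun n : Fin N => (⟨M * (n : ℕ) + (i : ℕ) % M, hlt n _ hri⟩ : Fin (M * N)))
      ?_ ?_ ?_ ?_
    · intro a _ b _ hab
      simp only [Fin.mk.injEq] at hab
      have : M * (a : ℕ) = M * (b : ℕ) := by omega
      exact Fin.ext (Nat.eq_of_mul_eq_mul_left hM this)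
    · intro a _; simp
    · intro k _ hk
      have hne : (i : ℕ) % M ≠ (k : ℕ) % M := by
        intro h
        apply hk
        refine ⟨⟨(k : ℕ) / M, Nat.div_lt_of_lt_mul k.isLt⟩, by simp, ?_⟩
        apply Fin.ext
        simp only [h]
        exact Nat.div_add_mod _ _
      simp [kron, Matrix.one_apply, hne]
    · intro n _
      have h1 : (M * (n : ℕ) + (i : ℕ) % M) / M = n := by
        rw [Nat.mul_add_div hM, Nat.div_eq_of_lt hri, add_zero]
      have h2 : (M * (n : ℕ) + (i : ℕ) % M) % M = (i : ℕ) % M := by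
        rw [Nat.mul_add_mod, Nat.mod_mod]
      simp only [kron, Matrix.of_apply, Matrix.one_apply, Fin.mk.injEq, h1, h2,
        Matrix.conjTranspose_apply, if_true, mul_one, Fin.eta, hm, hm']
  rw [← key]
  have hi : M * ((i : ℕ) / M) + (i : ℕ) % M = i := Nat.div_add_mod _ _
  have hj : M * ((j : ℕ) / M) + (j : ℕ) % M = j := Nat.div_add_mod _ _
  have hrj : (j : ℕ) % M < M := Nat.mod_lt _ hM
  simp only [← mul_assoc]
  rw [← Finset.sum_mul, core_sum M N hM hN q m m']
  have hmi : M * (m : ℕ) + (i : ℕ) % M = i := hi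
  have hmj : M * (m' : ℕ) + (j : ℕ) % M = j := hj
  rw [hmi]
  have hiff : (((i : ℕ) : ℤ) - ((j : ℕ) : ℤ) - q * M) % ((M * N : ℕ) : ℤ) = 0 ↔
      ((N : ℤ) ∣ ((m : ℕ) : ℤ) - ((m' : ℕ) : ℤ) - q) ∧ (i : ℕ) % M = (j : ℕ) % M := by
    have hMz : (M : ℤ) ≠ 0 := by exact_mod_cast hM.ne'
    have ei : ((i : ℕ) : ℤ) = M * ((m : ℕ) : ℤ) + ((i : ℕ) % M : ℕ) := by exact_mod_cast hmi.symm
    have ej : ((j : ℕ) : ℤ) = M * ((m' : ℕ) : ℤ) + ((j : ℕ) % M : ℕ) := by exact_mod_cast hmj.symm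
    rw [← Int.dvd_iff_emod_eq_zero]
    constructor
    · intro h
      have h1 : (M : ℤ) ∣ ((i : ℕ) : ℤ) - ((j : ℕ) : ℤ) := by
        have h2 : (M : ℤ) ∣ ((i : ℕ) : ℤ) - ((j : ℕ) : ℤ) - q * M :=
          (Dvd.intro _ (by push_cast; rfl)).trans h
        have := dvd_add h2 (Dvd.intro_left q rfl : (M : ℤ) ∣ q * M)
        simpa using this
      have h3 : (i : ℕ) % M = (j : ℕ) % M := by
        have := (Nat.modEq_iff_dvd (n := M) (a := j) (b := i)).2 h1
        exact this.symm
      refine ⟨?_, h3⟩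
      obtain ⟨t, ht⟩ := h
      refine ⟨t, mul_left_cancel₀ hMz ?_⟩
      rw [ei, ej, h3] at ht
      push_cast at ht
      linear_combination ht
    · rintro ⟨⟨t, ht⟩, h3⟩
      refine ⟨t, ?_⟩
      rw [ei, ej, h3]
      push_cast
      linear_combination (M : ℤ) * ht
  simp only [Pzpow, Matrix.of_apply, hiff, smul_eq_mul]
  by_cases h1 : (N : ℤ) ∣ ((m : ℕ) : ℤ) - ((m' : ℕ) : ℤ) - q <;>
  by_cases h2 : (i : ℕ) % M = (j : ℕ) % M <;> simp [h1, h2]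
end

section
/- Let K = MN and let H = Σ_{l=0}^{L} Σ_{q=−Q}^{Q} h_{l,q} D_K^q Π_K^l for complex coefficients h_{l,q}. Then the effective channel matrix of VOCDM satisfies H_eff := (Φ_N ⊗ I_M) H (Φ_N^H ⊗ I_M) = Σ_{l=0}^{L} Σ_{q=−Q}^{Q} α_q h_{l,q} D_K^q Π_K^{l+qM}, where α_q = exp(i(π/N)·q·((N mod 2) − q)). -/
open Matrix Complex

/-- The entry function of the DFnT matrix. -/
noncomputable def phiF (N : ℕ) (t : ℤ) : ℂ :=
  (1 / (Real.sqrt N : ℂ)) *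
      Complex.exp (-((Real.pi : ℂ) / 4) * Complex.I +
        ((Real.pi : ℂ) / N) * Complex.I * ((t : ℂ) + ((N % 2 : ℕ) : ℂ) / 2) ^ 2)

def circF (K : ℕ) (f : ℤ → ℂ) : Matrix (Fin K) (Fin K) ℂ :=
  Matrix.of fun i j : Fin K => f (((i : ℕ) : ℤ) - ((j : ℕ) : ℤ))

noncomputable def stretchF (M N : ℕ) (t : ℤ) : ℂ :=
  if t % (M : ℤ) = 0 then phiF N (t / M) else 0

lemma phiF_periodic (N : ℕ) (hN : 0 < N) (t : ℤ) : phiF N (t + N) = phiF N t := by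
  unfold phiF
  congr 1
  rw [Complex.exp_eq_exp_iff_exists_int]
  have hN' : (N : ℂ) ≠ 0 := by exact_mod_cast hN.ne'
  refine ⟨t + (N % 2 : ℕ) + (N / 2 : ℕ), ?_⟩
  have e : (N : ℂ) = 2 * ((N / 2 : ℕ) : ℂ) + ((N % 2 : ℕ) : ℂ) := by
    exact_mod_cast (Nat.div_add_mod N 2).symm
  have e2 : ((N / 2 : ℕ) : ℂ) = ((N : ℂ) - ((N % 2 : ℕ) : ℂ)) / 2 := by
    rw [eq_div_iff two_ne_zero]; linear_combination -e
  simp only [Int.cast_add, Int.cast_natCast]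
  rw [e2]
  field_simp
  ring

lemma periodic_emod {K : ℕ} {f : ℤ → ℂ} (hf : Function.Periodic f (K : ℤ)) {a b : ℤ}
    (h : (a - b) % (K : ℤ) = 0) : f a = f b := by
  obtain ⟨c, hc⟩ := Int.dvd_of_emod_eq_zero h
  have : a = b + c * K := by linarith
  rw [this]
  exact hf.int_mul c b

lemma stretchF_periodic (M N : ℕ) (hM : 0 < M) (hN : 0 < N) :
    Function.Periodic (stretchF M N) ((M * N : ℕ) : ℤ) := by
  intro t
  unfold stretchF
  have hM' : (M : ℤ) ≠ 0 := by exact_mod_cast hM.ne'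
  push_cast
  rw [Int.add_mul_emod_self_left, Int.add_mul_ediv_left _ _ hM', phiF_periodic N hN]

/-- The index congruent to a given integer. -/
def idxF (K : ℕ) (hK : 0 < K) (t : ℤ) : Fin K :=
  ⟨(t % (K : ℤ)).toNat, by
    have h1 := Int.emod_nonneg t (b := (K : ℤ)) (by omega)
    have h2 := Int.emod_lt_of_pos t (b := (K : ℤ)) (by omega)
    omega⟩

lemma idxF_coe (K : ℕ) (hK : 0 < K) (t : ℤ) : (((idxF K hK t : Fin K) : ℕ) : ℤ) = t % (K : ℤ) := by
  have h1 := Int.emod_nonneg t (b := (K : ℤ)) (by omega)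
  simp [idxF, h1]

lemma idxF_iff (K : ℕ) (hK : 0 < K) (t : ℤ) (i : Fin K) :
    (t - ((i : ℕ) : ℤ)) % (K : ℤ) = 0 ↔ i = idxF K hK t := by
  have hi : ((i : ℕ) : ℤ) % (K : ℤ) = ((i : ℕ) : ℤ) :=
    Int.emod_eq_of_lt (by omega) (by have := i.isLt; omega)
  rw [← Int.emod_eq_emod_iff_emod_sub_eq_zero, hi, Fin.ext_iff]
  have := idxF_coe K hK t
  omega

lemma P_circ {K : ℕ} (q : ℤ) {f : ℤ → ℂ} (hf : Function.Periodic f (K : ℤ)) :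
    Pzpow K q * circF K f = circF K (fun t => f (t - q)) := by
  ext i j
  have hK : 0 < K := i.pos
  simp only [Matrix.mul_apply, Pzpow, circF, Matrix.of_apply, ite_mul, one_mul, zero_mul]
  have : ∀ x : Fin K, ((((i : ℕ) : ℤ) - ((x : ℕ) : ℤ) - q) % (K : ℤ) = 0) ↔
      x = idxF K hK (((i : ℕ) : ℤ) - q) := fun x => by
    rw [← idxF_iff, sub_right_comm]
  simp only [this, Finset.sum_ite_eq', Finset.mem_univ, if_true]
  apply periodic_emod hf
  rw [idxF_coe, ← Int.emod_eq_emod_iff_emod_sub_eq_zero]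
  rw [show ((i : ℕ) : ℤ) - (j : ℕ) - q = (((i : ℕ) : ℤ) - q) - (j : ℕ) by ring]
  simp [Int.sub_emod]

lemma circ_P {K : ℕ} (q : ℤ) {f : ℤ → ℂ} (hf : Function.Periodic f (K : ℤ)) :
    circF K f * Pzpow K q = circF K (fun t => f (t - q)) := by
  ext i j
  have hK : 0 < K := i.pos
  simp only [Matrix.mul_apply, Pzpow, circF, Matrix.of_apply, mul_ite, mul_one, mul_zero]
  have : ∀ x : Fin K, ((((x : ℕ) : ℤ) - ((j : ℕ) : ℤ) - q) % (K : ℤ) = 0) ↔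
      x = idxF K hK (((j : ℕ) : ℤ) + q) := fun x => by
    rw [← idxF_iff, ← Int.dvd_iff_emod_eq_zero, ← Int.dvd_iff_emod_eq_zero, ← dvd_neg]
    ring_nf
  simp only [this, Finset.sum_ite_eq', Finset.mem_univ, if_true]
  apply periodic_emod hf
  rw [idxF_coe, ← Int.emod_eq_emod_iff_emod_sub_eq_zero]
  rw [show ((i : ℕ) : ℤ) - (j : ℕ) - q = ((i : ℕ) : ℤ) - ((j : ℕ) + q) by ring]
  simp [Int.sub_emod]

lemma P_eq_circ (K : ℕ) (q : ℤ) :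
    Pzpow K q = circF K (fun t => if (t - q) % (K : ℤ) = 0 then 1 else 0) := rfl

lemma P_mul_P (K : ℕ) (a b : ℤ) : Pzpow K a * Pzpow K b = Pzpow K (b + a) := by
  rw [P_eq_circ K b, P_circ, P_eq_circ]
  · congr 1
    funext t
    rw [show t - a - b = t - (b + a) by ring]
  · intro t
    simp only
    rw [show t + (K : ℤ) - b = t - b + K by ring, Int.add_emod_right]

lemma kron_one_eq (M N : ℕ) (hM : 0 < M) :
    kron hM (dfnt N) (1 : Matrix (Fin M) (Fin M) ℂ) = circF (M * N) (stretchF M N) := by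
  ext i j
  simp only [kron, circF, stretchF, Matrix.of_apply, Matrix.one_apply, Fin.mk.injEq]
  have hM' : (M : ℤ) ≠ 0 := by exact_mod_cast hM.ne'
  have e : ((i : ℕ) % M = (j : ℕ) % M) ↔ (((i : ℕ) : ℤ) - ((j : ℕ) : ℤ)) % (M : ℤ) = 0 := by
    rw [← Int.emod_eq_emod_iff_emod_sub_eq_zero]
    exact_mod_cast Iff.rfl
  by_cases hc : (i : ℕ) % M = (j : ℕ) % M
  · rw [if_pos hc, if_pos (e.1 hc), mul_one]
    have h1 : ((M * ((i : ℕ) / M) + (i : ℕ) % M : ℕ) : ℤ) = (i : ℕ) := by rw [Nat.div_add_mod]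
    have h2 : ((M * ((j : ℕ) / M) + (j : ℕ) % M : ℕ) : ℤ) = (j : ℕ) := by rw [Nat.div_add_mod]
    have h3 : (((i : ℕ) : ℤ) - ((j : ℕ) : ℤ)) / (M : ℤ)
        = (((i : ℕ) / M : ℕ) : ℤ) - (((j : ℕ) / M : ℕ) : ℤ) := by
      apply Int.ediv_eq_of_eq_mul_right hM'
      rw [← h1, ← h2, hc]
      simp only [Nat.cast_add, Nat.cast_mul]
      ring
    rw [h3, phiF, dfnt, Matrix.of_apply]
    simp only [Int.cast_sub, Int.cast_natCast]
  · rw [if_neg hc, if_neg (fun h => hc (e.2 h)), mul_zero]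

lemma circ_D (M N : ℕ) (hM : 0 < M) (hN : 0 < N) (q : ℤ) :
    circF (M * N) (stretchF M N) * Dzpow (M * N) q =
      alphaCoef N q • (Dzpow (M * N) q * circF (M * N) (fun t => stretchF M N (t - q * M))) := by
  ext i j
  have hM' : (M : ℤ) ≠ 0 := by exact_mod_cast hM.ne'
  have hMc : (M : ℂ) ≠ 0 := by exact_mod_cast hM.ne'
  have hNc : (N : ℂ) ≠ 0 := by exact_mod_cast hN.ne'
  simp only [Dzpow, Matrix.mul_diagonal, Matrix.smul_apply, Matrix.diagonal_mul, circF,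
    Matrix.of_apply, smul_eq_mul, stretchF, alphaCoef]
  have e1 : ∀ t : ℤ, (t - q * M) % (M : ℤ) = t % M := fun t => by simp
  have e2 : ∀ t : ℤ, (t - q * M) / (M : ℤ) = t / M - q := fun t => by
    rw [sub_eq_add_neg, ← neg_mul, Int.add_mul_ediv_right _ _ hM']; ring
  rw [e1, e2]
  split_ifs with hc
  · obtain ⟨c, hc⟩ := Int.dvd_of_emod_eq_zero hc
    rw [hc, Int.mul_ediv_cancel_left _ hM']
    have hi : ((i : ℕ) : ℂ) = (j : ℕ) + M * c := by
      have : ((i : ℕ) : ℤ) = (j : ℕ) + M * c := by linarith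
      exact_mod_cast this
    rw [phiF, phiF, hi]
    rw [mul_assoc, mul_left_comm (Complex.exp (2 * _ * _ * _ * _ / _)), 
      mul_left_comm (Complex.exp (Complex.I * _ * _ * _)), ← Complex.exp_add, ← Complex.exp_add,
      ← Complex.exp_add]
    congr 2
    push_cast
    field_simp
    ring
  · simp

lemma dfnt_mul (N : ℕ) (hN : 0 < N) : dfnt N * (dfnt N)ᴴ = 1 := by
  ext m k
  have hNc : (N : ℂ) ≠ 0 := by exact_mod_cast hN.ne'
  have hs : (Real.sqrt N : ℂ) * (Real.sqrt N : ℂ) = N := by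
    rw [← Complex.ofReal_mul, Real.mul_self_sqrt (Nat.cast_nonneg N)]; simp
  have hs0 : (Real.sqrt N : ℂ) ≠ 0 := by
    intro h; rw [h] at hs; simp at hs; exact hNc hs.symm
  set ζ : ℂ := Complex.exp (-(2 * Real.pi * Complex.I * (((m : ℕ) : ℂ) - ((k : ℕ) : ℂ)) / N)) with hζ
  set C : ℂ := Complex.exp (((Real.pi : ℂ) / N) * Complex.I *
      ((((m : ℕ) : ℂ) + ((N % 2 : ℕ) : ℂ) / 2) ^ 2 - (((k : ℕ) : ℂ) + ((N % 2 : ℕ) : ℂ) / 2) ^ 2)) with hC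
  have key : ∀ n : Fin N, dfnt N m n * (dfnt N)ᴴ n k = (1 / N) * C * ζ ^ (n : ℕ) := by
    intro n
    rw [Matrix.conjTranspose_apply]
    simp only [dfnt, Matrix.of_apply, RCLike.star_def, map_mul, map_div₀, map_one,
      Complex.conj_ofReal, ← Complex.exp_conj, map_add, map_neg, map_pow, map_sub, Complex.conj_I,
      map_natCast, map_ofNat]
    rw [mul_mul_mul_comm, ← Complex.exp_add, div_mul_div_comm, hs, one_mul, mul_assoc _ C, hζ,
      ← Complex.exp_nat_mul, hC, ← Complex.exp_add]
    congr 2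
    field_simp
    ring
  rw [Matrix.mul_apply, Finset.sum_congr rfl (fun n _ => key n), ← Finset.mul_sum,
    Fin.sum_univ_eq_sum_range (fun n => ζ ^ n) N]
  by_cases hmk : m = k
  · subst hmk
    have h1 : ζ = 1 := by simp [hζ]
    have h2 : C = 1 := by simp [hC]
    simp [h1, h2, hNc]
  · rw [Matrix.one_apply_ne hmk]
    have h1 : ζ ^ N = 1 := by
      rw [hζ, ← Complex.exp_nat_mul, Complex.exp_eq_one_iff]
      refine ⟨((k : ℕ) : ℤ) - ((m : ℕ) : ℤ), ?_⟩
      push_cast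
      field_simp
      ring
    have h2 : ζ ≠ 1 := by
      rw [hζ, Ne, Complex.exp_eq_one_iff]
      rintro ⟨c, hc⟩
      have hpi : (2 * Real.pi * Complex.I : ℂ) ≠ 0 := Complex.two_pi_I_ne_zero
      have h3 : ((k : ℕ) : ℂ) - ((m : ℕ) : ℂ) = c * N := by
        apply mul_left_cancel₀ hpi
        field_simp at hc
        linear_combination (2 * Real.pi * Complex.I) * hc
      have h4 : ((k : ℕ) : ℤ) - ((m : ℕ) : ℤ) = c * N := by exact_mod_cast h3
      have h5 : ((k : ℕ) : ℤ) - ((m : ℕ) : ℤ) = 0 := by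
        apply Int.eq_zero_of_abs_lt_dvd (m := (N : ℤ)) ⟨c, by rw [h4]; ring⟩
        rw [abs_lt]
        have := k.isLt
        have := m.isLt
        omega
      apply hmk
      apply Fin.ext
      omega
    have h3 := mul_neg_geom_sum ζ N
    rw [h1, sub_self] at h3
    rcases mul_eq_zero.1 h3 with h | h
    · exact absurd (sub_eq_zero.1 h).symm h2
    · rw [h, mul_zero]

lemma kron_mul_one (M N : ℕ) (hM : 0 < M) (A B : Matrix (Fin N) (Fin N) ℂ) (h : A * B = 1) :
    kron hM A (1 : Matrix (Fin M) (Fin M) ℂ) * kron hM B 1 = 1 := by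
  let e : Fin (M * N) ≃ Fin N × Fin M := (finCongr (mul_comm M N)).trans finProdFinEquiv.symm
  have hk : ∀ A : Matrix (Fin N) (Fin N) ℂ, kron hM A (1 : Matrix (Fin M) (Fin M) ℂ) =
      (Matrix.kroneckerMap (· * ·) A (1 : Matrix (Fin M) (Fin M) ℂ)).submatrix e e := by
    intro A
    ext i j
    rfl
  rw [hk, hk, Matrix.submatrix_mul_equiv, ← Matrix.mul_kronecker_mul, h, Matrix.one_mul,
    Matrix.one_kronecker_one, Matrix.submatrix_one_equiv]

/-- With `K = MN` and `H = Σ_{l=0}^{L} Σ_{q=−Q}^{Q} h_{l,q} D_K^q Π_K^l`, the effective channel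
matrix of VOCDM satisfies
`(Φ_N ⊗ I_M) H (Φ_N^H ⊗ I_M) = Σ_{l=0}^{L} Σ_{q=−Q}^{Q} α_q h_{l,q} D_K^q Π_K^{l+qM}`. -/
theorem vocdm_effective_channel (M N L Q : ℕ) (hM : 0 < M) (hN : 0 < N)
    (h : ℕ → ℤ → ℂ) (H : Matrix (Fin (M * N)) (Fin (M * N)) ℂ)
    (hH : H = ∑ l ∈ Finset.range (L + 1), ∑ q ∈ Finset.Icc (-(Q : ℤ)) (Q : ℤ),
        h l q • (Dzpow (M * N) q * Pzpow (M * N) (l : ℤ))) :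
    kron hM (dfnt N) (1 : Matrix (Fin M) (Fin M) ℂ) * H *
        kron hM (dfnt N)ᴴ (1 : Matrix (Fin M) (Fin M) ℂ) =
      ∑ l ∈ Finset.range (L + 1), ∑ q ∈ Finset.Icc (-(Q : ℤ)) (Q : ℤ),
        (alphaCoef N q * h l q) • (Dzpow (M * N) q * Pzpow (M * N) ((l : ℤ) + q * M)) := by
  subst hH
  rw [Matrix.mul_sum, Matrix.sum_mul]
  refine Finset.sum_congr rfl fun l _ => ?_
  rw [Matrix.mul_sum, Matrix.sum_mul]
  refine Finset.sum_congr rfl fun q _ => ?_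
  have hper := stretchF_periodic M N hM hN
  have hAB := kron_mul_one M N hM _ _ (dfnt_mul N hN)
  rw [kron_one_eq] at hAB ⊢
  have hD := circ_D M N hM hN q
  rw [← P_circ (q * M) hper] at hD
  rw [Matrix.mul_smul, Matrix.smul_mul, ← Matrix.mul_assoc, hD, Matrix.smul_mul, Matrix.smul_mul,
    smul_smul, mul_comm (h l q)]
  congr 1
  rw [Matrix.mul_assoc (Dzpow _ _), Matrix.mul_assoc (Pzpow _ _), circ_P _ hper, ← P_circ _ hper,
    ← Matrix.mul_assoc (Pzpow _ _), P_mul_P, Matrix.mul_assoc, Matrix.mul_assoc, hAB,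
    Matrix.mul_one]
end
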